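/- Let G = SL₂(ℝ), let dg be the measure on G obtained as the pushforward of (2π y²)^{−1} dx dy dθ under the Iwasawa parametrization (x,y,θ) ↦ n[x]·a[y]·k[θ], (x,y,θ) ∈ ℝ × (0,∞) × [0,2π). For integrable f₁, f₂ : G → ℂ define the convolution (f₁ * f₂)(h) = ∫_G f₁(g⁻¹h) f₂(g) dg, the Abel transform (𝒜f)(a[y]) = y^{1/2} ∫_ℝ f(a[y]·n[x]) dx, and for F₁, F₂ on the diagonal subgroup A = {a[y] : y > 0} the convolution (F₁ *_A F₂)(a[y]) = ∫₀^∞ F₁(a[y/y₀]) F₂(a[y₀]) dy₀/y₀. Let ℓ ∈ ℤ and let f₁, f₂ : G → ℂ be continuous and compactly supported, with f₁ of left type ℓ (i.e. f₁(k[θ]g) = e^{iℓθ} f₁(g) for all θ, g) and f₂ of right type ℓ (i.e. f₂(g·k[θ]) = e^{iℓθ} f₂(g) for all θ, g). Then 𝒜(f₁ * f₂) = (𝒜f₁) *_A (𝒜f₂). -/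

import Mathlib

open MeasureTheory Complex

noncomputable section

instance : MeasurableSpace (Matrix (Fin 2) (Fin 2) ℝ) :=
  inferInstanceAs (MeasurableSpace (Fin 2 → Fin 2 → ℝ))

/-- `n[x] = (1, x; 0, 1)`. -/
def nMat (x : ℝ) : Matrix (Fin 2) (Fin 2) ℝ := !![1, x; 0, 1]

/-- `a[y] = diag(√y, 1/√y)`. -/
def aMat (y : ℝ) : Matrix (Fin 2) (Fin 2) ℝ :=
  !![Real.sqrt y, 0; 0, (Real.sqrt y)⁻¹]

/-- `k[θ] = (cos θ, sin θ; −sin θ, cos θ)`. -/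
def kMat (θ : ℝ) : Matrix (Fin 2) (Fin 2) ℝ :=
  !![Real.cos θ, Real.sin θ; -Real.sin θ, Real.cos θ]

/-- The Haar measure of `SL₂(ℝ)` (supported on `SL₂(ℝ)` inside the space of matrices):
the pushforward of `(2π y²)⁻¹ dx dy dθ` under `(x,y,θ) ↦ n[x]·a[y]·k[θ]`,
`(x,y,θ) ∈ ℝ × (0,∞) × [0,2π)`. -/
def haarSL2 : Measure (Matrix (Fin 2) (Fin 2) ℝ) :=
  Measure.map (fun p : ℝ × ℝ × ℝ => nMat p.1 * aMat p.2.1 * kMat p.2.2)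
    ((((volume : Measure (ℝ × ℝ × ℝ)).restrict
        (Set.univ ×ˢ Set.Ioi 0 ×ˢ Set.Ico 0 (2 * Real.pi))).withDensity
      fun p => ENNReal.ofReal (1 / (2 * Real.pi * p.2.1 ^ 2))))

/-- Convolution on `SL₂(ℝ)`: `(f₁ * f₂)(h) = ∫ f₁(g⁻¹h) f₂(g) dg`. -/
def convG (f₁ f₂ : Matrix (Fin 2) (Fin 2) ℝ → ℂ) (h : Matrix (Fin 2) (Fin 2) ℝ) : ℂ :=
  ∫ g, f₁ (g⁻¹ * h) * f₂ g ∂haarSL2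

/-- The Abel transform `(𝒜f)(a[y]) = y^{1/2} ∫ f(a[y]·n[x]) dx`, as a function of `y`. -/
def abelT (f : Matrix (Fin 2) (Fin 2) ℝ → ℂ) (y : ℝ) : ℂ :=
  (Real.sqrt y : ℂ) * ∫ x : ℝ, f (aMat y * nMat x)

/-- Convolution on the diagonal subgroup `A`:
`(F₁ *_A F₂)(a[y]) = ∫₀^∞ F₁(a[y/y₀]) F₂(a[y₀]) dy₀/y₀`, as a function of `y`. -/
def convA (F₁ F₂ : ℝ → ℂ) (y : ℝ) : ℂ :=
  ∫ y₀ in Set.Ioi (0 : ℝ), F₁ (y / y₀) * F₂ y₀ * ((y₀⁻¹ : ℝ) : ℂ)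

/-! Fubini turns `𝒜(f₁ * f₂)(a[y])` into `√y ∫_G F(g) dg` with
`F(g) = f₂(g) ∫ f₁(g⁻¹ a[y] n[x]) dx`. The phases of `f₁(k[θ]⁻¹ ·)` and `f₂(· k[θ])` cancel, so `F`
is right `K`-invariant and its integral reduces to `∫₀^∞ ∫ F(a[t] n[v]) dv dt/t`. There
`(a[t] n[v])⁻¹ a[y] n[x]` is `a[y/t] n[x]` up to a translation of `x`, so the integrals over `x` and
`v` decouple, and `√y = √(y/t) √t` distributes the normalizing factor. -/

instance : BorelSpace (Matrix (Fin 2) (Fin 2) ℝ) :=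
  inferInstanceAs (BorelSpace (Fin 2 → Fin 2 → ℝ))

instance : SecondCountableTopology (Matrix (Fin 2) (Fin 2) ℝ) :=
  inferInstanceAs (SecondCountableTopology (Fin 2 → Fin 2 → ℝ))

lemma nMat_zero : nMat 0 = 1 := by simp [nMat, Matrix.one_fin_two]

lemma aMat_one : aMat 1 = 1 := by simp [aMat, Matrix.one_fin_two]

lemma nMat_mul_nMat (u v : ℝ) : nMat u * nMat v = nMat (u + v) := by
  simp [nMat, add_comm]

lemma aMat_mul_aMat {s : ℝ} (hs : 0 ≤ s) (t : ℝ) : aMat s * aMat t = aMat (s * t) := by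
  simp [aMat, Real.sqrt_mul hs, mul_comm]

lemma nMat_mul_aMat (u : ℝ) {t : ℝ} (ht : 0 < t) : nMat u * aMat t = aMat t * nMat (u / t) := by
  have hu : u * (√t)⁻¹ = √t * (u / t) := by
    field_simp
    rw [Real.sq_sqrt ht.le]
  simp [nMat, aMat, hu]

lemma kMat_mul_transpose (θ : ℝ) : kMat θ * (kMat θ).transpose = 1 := by
  ext i j
  fin_cases i <;> fin_cases j <;> simp [kMat, Matrix.mul_apply] <;>
    linarith [Real.sin_sq_add_cos_sq θ]

lemma inv_nMat (u : ℝ) : (nMat u)⁻¹ = nMat (-u) :=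
  Matrix.inv_eq_right_inv (by rw [nMat_mul_nMat, add_neg_cancel, nMat_zero])

lemma inv_aMat {t : ℝ} (ht : 0 < t) : (aMat t)⁻¹ = aMat t⁻¹ :=
  Matrix.inv_eq_right_inv (by rw [aMat_mul_aMat ht.le, mul_inv_cancel₀ ht.ne', aMat_one])

lemma inv_kMat (θ : ℝ) : (kMat θ)⁻¹ = kMat (-θ) := by
  rw [Matrix.inv_eq_right_inv (kMat_mul_transpose θ)]
  ext i j
  fin_cases i <;> fin_cases j <;> simp [kMat]

lemma inv_aMat_mul_nMat_mul {t y : ℝ} (ht : 0 < t) (hy : 0 < y) (v x : ℝ) :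
    (aMat t * nMat v)⁻¹ * (aMat y * nMat x) = aMat (y / t) * nMat (-v / (y / t) + x) := by
  calc (aMat t * nMat v)⁻¹ * (aMat y * nMat x)
      = nMat (-v) * (aMat t⁻¹ * aMat y) * nMat x := by
        rw [Matrix.mul_inv_rev, inv_nMat, inv_aMat ht]
        simp only [mul_assoc]
    _ = nMat (-v) * aMat (y / t) * nMat x := by
        rw [aMat_mul_aMat (inv_nonneg.2 ht.le), inv_mul_eq_div]
    _ = aMat (y / t) * nMat (-v / (y / t) + x) := by
        rw [nMat_mul_aMat _ (div_pos hy ht), mul_assoc, nMat_mul_nMat]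

/-- The Iwasawa parametrization `(x, y, θ) ↦ n[x]·a[y]·k[θ]`. -/
def iwasawa (p : ℝ × ℝ × ℝ) : Matrix (Fin 2) (Fin 2) ℝ :=
  nMat p.1 * aMat p.2.1 * kMat p.2.2

/-- The measure `dx dy dθ` on the Iwasawa coordinates `ℝ × (0, ∞) × [0, 2π)`, as a product
measure so that Fubini's theorem applies. -/
def iwasawaVolume : Measure (ℝ × ℝ × ℝ) :=
  (volume : Measure ℝ).prod
    ((volume.restrict (Set.Ioi 0)).prod (volume.restrict (Set.Ico 0 (2 * Real.pi))))

instance : SFinite iwasawaVolume := by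
  unfold iwasawaVolume
  infer_instance

lemma iwasawaVolume_eq_restrict :
    iwasawaVolume = volume.restrict (Set.univ ×ˢ Set.Ioi 0 ×ˢ Set.Ico 0 (2 * Real.pi)) := by
  simp only [iwasawaVolume, Measure.volume_eq_prod, ← Measure.prod_restrict, Measure.restrict_univ]

/-- The density `(2π y²)⁻¹` of the Haar measure with respect to `dx dy dθ`. -/
def iwasawaDensity (p : ℝ × ℝ × ℝ) : ℝ :=
  1 / (2 * Real.pi * p.2.1 ^ 2)

lemma iwasawaDensity_nonneg (p : ℝ × ℝ × ℝ) : 0 ≤ iwasawaDensity p := by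
  unfold iwasawaDensity
  positivity

lemma measurable_iwasawaDensity : Measurable iwasawaDensity := by
  unfold iwasawaDensity
  fun_prop

lemma haarSL2_eq_map_iwasawa :
    haarSL2 =
      (iwasawaVolume.withDensity fun p => ENNReal.ofReal (iwasawaDensity p)).map iwasawa := by
  rw [iwasawaVolume_eq_restrict]
  rfl

instance : SFinite haarSL2 := by
  rw [haarSL2_eq_map_iwasawa]
  infer_instance

lemma measurable_iwasawa : Measurable iwasawa := by
  have hn : Measurable nMat := (by unfold nMat; fun_prop : Continuous nMat).measurable
  have hk : Measurable kMat := (by unfold kMat; fun_prop : Continuous kMat).measurable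
  have ha : Measurable aMat := by
    refine measurable_pi_iff.2 fun i => measurable_pi_iff.2 fun j => ?_
    fin_cases i <;> fin_cases j
    exacts [Real.continuous_sqrt.measurable, measurable_const, measurable_const,
      Real.continuous_sqrt.measurable.inv]
  exact ((hn.comp measurable_fst).mul (ha.comp measurable_snd.fst)).mul
    (hk.comp measurable_snd.snd)

lemma ae_iwasawaVolume_mem :
    ∀ᵐ p ∂iwasawaVolume, p ∈ Set.univ ×ˢ Set.Ioi (0 : ℝ) ×ˢ Set.Ico 0 (2 * Real.pi) := by
  rw [iwasawaVolume_eq_restrict]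
  exact ae_restrict_mem (by measurability)

lemma det_iwasawa {p : ℝ × ℝ × ℝ} (hp : 0 < p.2.1) : (iwasawa p).det = 1 := by
  have hy : √p.2.1 * (√p.2.1)⁻¹ = 1 := mul_inv_cancel₀ (Real.sqrt_pos.2 hp).ne'
  rw [iwasawa, Matrix.det_mul, Matrix.det_mul]
  simp [nMat, aMat, kMat, hy, ← sq]

lemma ae_haarSL2_det_eq_one : ∀ᵐ g ∂haarSL2, g.det = 1 := by
  have hdet : MeasurableSet {g : Matrix (Fin 2) (Fin 2) ℝ | g.det = 1} :=
    (isClosed_singleton.preimage (by fun_prop : Continuous Matrix.det)).measurableSet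
  rw [haarSL2_eq_map_iwasawa, ae_map_iff measurable_iwasawa.aemeasurable hdet]
  refine (withDensity_absolutelyContinuous _ _).ae_le ?_
  filter_upwards [ae_iwasawaVolume_mem] with p hp using det_iwasawa hp.2.1

lemma iwasawa_mul_transpose {p : ℝ × ℝ × ℝ} (hp : 0 < p.2.1) :
    iwasawa p * (iwasawa p).transpose =
      !![p.2.1 + p.1 ^ 2 / p.2.1, p.1 / p.2.1; p.1 / p.2.1, p.2.1⁻¹] := by
  obtain ⟨x, y, θ⟩ := p
  replace hp : 0 < y := hp
  have hy : √y * √y = y := Real.mul_self_sqrt hp.le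
  calc iwasawa (x, y, θ) * (iwasawa (x, y, θ)).transpose
      = nMat x * aMat y * (kMat θ * (kMat θ).transpose) * (nMat x * aMat y).transpose := by
        simp only [iwasawa, Matrix.transpose_mul, mul_assoc]
    _ = _ := by
        rw [kMat_mul_transpose, mul_one]
        ext i j
        fin_cases i <;> fin_cases j <;> simp [nMat, aMat, Matrix.mul_apply, hy] <;>
          field_simp <;> simp [Real.sq_sqrt hp.le, mul_comm]

-- The bounds come from the diagonal entries `y + x² / y` and `1 / y` of `g gᵀ`.
lemma exists_iwasawa_mem_imp_mem_Icc {K : Set (Matrix (Fin 2) (Fin 2) ℝ)} (hK : IsCompact K) :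
    ∃ C > 0, ∀ p : ℝ × ℝ × ℝ, 0 < p.2.1 → iwasawa p ∈ K →
      p.1 ∈ Set.Icc (-C) C ∧ p.2.1 ∈ Set.Icc C⁻¹ C := by
  obtain ⟨C, hC⟩ := hK.exists_bound_of_continuousOn
    (f := fun g => ((g * g.transpose) 0 0, (g * g.transpose) 1 1)) (by fun_prop)
  have hmax : 0 < max C 1 := zero_lt_one.trans_le (le_max_right C 1)
  refine ⟨max C 1, hmax, fun p hp hpK => ?_⟩
  obtain ⟨h₀, h₁⟩ := norm_prod_le_iff.1 ((hC _ hpK).trans (le_max_left C 1))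
  rw [iwasawa_mul_transpose hp] at h₀ h₁
  replace h₀ : p.2.1 + p.1 ^ 2 / p.2.1 ≤ max C 1 := (le_abs_self _).trans h₀
  replace h₁ : p.2.1⁻¹ ≤ max C 1 := (le_abs_self _).trans h₁
  have hy : p.2.1 ≤ max C 1 := (le_add_of_nonneg_right (by positivity)).trans h₀
  have hx : p.1 ^ 2 ≤ max C 1 ^ 2 :=
    calc p.1 ^ 2 ≤ max C 1 * p.2.1 :=
          (div_le_iff₀ hp).1 ((le_add_of_nonneg_left hp.le).trans h₀)
      _ ≤ max C 1 ^ 2 := by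
          rw [sq]
          gcongr
  exact ⟨abs_le.1 (abs_le_of_sq_le_sq hx hmax.le), inv_le_of_inv_le₀ hp h₁, hy⟩

instance : IsFiniteMeasureOnCompacts haarSL2 where
  lt_top_of_isCompact K hK := by
    obtain ⟨C, hC, hbox⟩ := exists_iwasawa_mem_imp_mem_Icc hK
    set B : Set (ℝ × ℝ × ℝ) := Set.Icc (-C) C ×ˢ Set.Icc C⁻¹ C ×ˢ Set.Icc 0 (2 * Real.pi)
    have hB : IsCompact B := isCompact_Icc.prod (isCompact_Icc.prod isCompact_Icc)
    have hdensity : ContinuousOn iwasawaDensity B := by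
      refine ContinuousOn.div (by fun_prop) (by fun_prop) fun p hp => ?_
      have : 0 < p.2.1 := (inv_pos.2 hC).trans_le hp.2.1.1
      positivity
    rw [haarSL2_eq_map_iwasawa, Measure.map_apply measurable_iwasawa hK.measurableSet]
    calc (iwasawaVolume.withDensity fun p => ENNReal.ofReal (iwasawaDensity p)) (iwasawa ⁻¹' K)
        ≤ (iwasawaVolume.withDensity fun p => ENNReal.ofReal (iwasawaDensity p)) B := by
          refine measure_mono_ae ((withDensity_absolutelyContinuous _ _).ae_le ?_)
          filter_upwards [ae_iwasawaVolume_mem] with p hp hpK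
          obtain ⟨hx, hy⟩ := hbox p hp.2.1 hpK
          exact ⟨hx, hy, Set.Ico_subset_Icc_self hp.2.2⟩
      _ = ∫⁻ p in B, ENNReal.ofReal (iwasawaDensity p) ∂iwasawaVolume :=
          withDensity_apply _ hB.measurableSet
      _ ≤ ∫⁻ p in B, ENNReal.ofReal (iwasawaDensity p) := by
          rw [iwasawaVolume_eq_restrict]
          exact lintegral_mono' (Measure.restrict_mono_measure Measure.restrict_le_self _) le_rfl
      _ < ⊤ := (hdensity.integrableOn_compact hB).lintegral_lt_top

lemma isCompact_setOf_aMat_mul_nMat_mem {K : Set (Matrix (Fin 2) (Fin 2) ℝ)} (hK : IsCompact K)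
    {y : ℝ} (hy : 0 < y) : IsCompact {x | aMat y * nMat x ∈ K} := by
  have hleft : Function.LeftInverse (fun g : Matrix (Fin 2) (Fin 2) ℝ => (√y)⁻¹ * g 0 1)
      fun x => aMat y * nMat x := fun x => by
    have hsqrt := Real.sqrt_pos.2 hy
    simp [aMat, nMat, hsqrt.ne']
  exact (hleft.isClosedEmbedding (by fun_prop) (by unfold nMat; fun_prop)).isCompact_preimage hK

section Integration

variable {E : Type*} [NormedAddCommGroup E] [NormedSpace ℝ E]
  {F : Matrix (Fin 2) (Fin 2) ℝ → E}

lemma integral_haarSL2 (hF : AEStronglyMeasurable F haarSL2) :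
    ∫ g, F g ∂haarSL2 = ∫ p, iwasawaDensity p • F (iwasawa p) ∂iwasawaVolume := by
  rw [haarSL2_eq_map_iwasawa] at hF ⊢
  rw [integral_map measurable_iwasawa.aemeasurable hF,
    integral_withDensity_eq_integral_toReal_smul measurable_iwasawaDensity.ennreal_ofReal (by simp)]
  simp only [ENNReal.toReal_ofReal (iwasawaDensity_nonneg _)]

lemma integrable_smul_comp_iwasawa (hF : Integrable F haarSL2) :
    Integrable (fun p => iwasawaDensity p • F (iwasawa p)) iwasawaVolume := by
  rw [haarSL2_eq_map_iwasawa] at hF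
  simpa only [ENNReal.toReal_ofReal (iwasawaDensity_nonneg _), Function.comp_apply] using
    (integrable_withDensity_iff_integrable_smul' measurable_iwasawaDensity.ennreal_ofReal
      (by simp)).1 (hF.comp_measurable measurable_iwasawa)

variable (F) in
lemma integral_nMat_mul_aMat {t : ℝ} (ht : 0 < t) :
    ∫ u, F (nMat u * aMat t) = t • ∫ x, F (aMat t * nMat x) := by
  simp_rw [nMat_mul_aMat _ ht]
  rw [Measure.integral_comp_div (fun x => F (aMat t * nMat x)), abs_of_pos ht]

lemma integral_inv_aMat_mul_nMat_mul {t y : ℝ} (ht : 0 < t) (hy : 0 < y) (v : ℝ) :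
    ∫ x, F ((aMat t * nMat v)⁻¹ * (aMat y * nMat x)) = ∫ x, F (aMat (y / t) * nMat x) := by
  simp_rw [inv_aMat_mul_nMat_mul ht hy]
  exact integral_add_left_eq_self (fun x => F (aMat (y / t) * nMat x)) _

theorem integral_haarSL2_of_mul_kMat_eq (hF : Integrable F haarSL2)
    (hK : ∀ θ g, F (g * kMat θ) = F g) :
    ∫ g, F g ∂haarSL2 = ∫ t in Set.Ioi (0 : ℝ), t⁻¹ • ∫ x, F (aMat t * nMat x) := by
  have hint := integrable_smul_comp_iwasawa hF
  rw [integral_haarSL2 hF.aestronglyMeasurable]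
  simp only [iwasawa, iwasawaDensity, iwasawaVolume, hK] at hint ⊢
  rw [integral_prod_symm _ hint]
  simp only [integral_smul]
  rw [integral_fun_fst fun t : ℝ => (1 / (2 * Real.pi * t ^ 2)) • ∫ u, F (nMat u * aMat t),
    measureReal_restrict_apply_univ, Real.volume_real_Ico_of_le Real.two_pi_pos.le, sub_zero,
    ← integral_smul]
  refine setIntegral_congr_fun measurableSet_Ioi fun t (ht : 0 < t) => ?_
  simp only [integral_nMat_mul_aMat F ht, smul_smul]
  congr 1
  field_simp

end Integration

section Convolution

variable {f₁ f₂ : Matrix (Fin 2) (Fin 2) ℝ → ℂ}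

lemma convG_integrand_mul_kMat {ℓ : ℤ}
    (htype₁ : ∀ (θ : ℝ) (g : Matrix (Fin 2) (Fin 2) ℝ),
      f₁ (kMat θ * g) = Complex.exp (Complex.I * (ℓ : ℂ) * (θ : ℂ)) * f₁ g)
    (htype₂ : ∀ (θ : ℝ) (g : Matrix (Fin 2) (Fin 2) ℝ),
      f₂ (g * kMat θ) = Complex.exp (Complex.I * (ℓ : ℂ) * (θ : ℂ)) * f₂ g)
    (θ : ℝ) (g h : Matrix (Fin 2) (Fin 2) ℝ) :
    f₁ ((g * kMat θ)⁻¹ * h) * f₂ (g * kMat θ) = f₁ (g⁻¹ * h) * f₂ g := by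
  rw [Matrix.mul_inv_rev, inv_kMat, mul_assoc, htype₁, htype₂, mul_mul_mul_comm,
    ← Complex.exp_add]
  simp

open scoped Pointwise in
-- The factorization `h = g (g⁻¹ h)` confines `x` to a compact set.
theorem integrable_convG_integrand (hc₁ : Continuous f₁) (hc₂ : Continuous f₂)
    (hs₁ : HasCompactSupport f₁) (hs₂ : HasCompactSupport f₂) {y : ℝ} (hy : 0 < y) :
    Integrable (fun q : ℝ × Matrix (Fin 2) (Fin 2) ℝ =>
      f₁ (q.2⁻¹ * (aMat y * nMat q.1)) * f₂ q.2) (volume.prod haarSL2) := by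
  set S : Set (ℝ × Matrix (Fin 2) (Fin 2) ℝ) :=
    {x | aMat y * nMat x ∈ tsupport f₂ * tsupport f₁} ×ˢ tsupport f₂
  have hS : IsCompact S :=
    (isCompact_setOf_aMat_mul_nMat_mem (hs₂.isCompact.mul hs₁.isCompact) hy).prod hs₂.isCompact
  have hdet : ∀ᵐ q ∂(volume : Measure ℝ).prod haarSL2, q.2.det = 1 :=
    Measure.quasiMeasurePreserving_snd.ae ae_haarSL2_det_eq_one
  have hcont : Continuous fun q : ℝ × Matrix (Fin 2) (Fin 2) ℝ =>
      f₁ (q.2.adjugate * (aMat y * nMat q.1)) * f₂ q.2 := by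
    unfold nMat
    fun_prop
  have hadj : ∀ᵐ q ∂(volume : Measure ℝ).prod haarSL2,
      f₁ (q.2.adjugate * (aMat y * nMat q.1)) * f₂ q.2 =
        f₁ (q.2⁻¹ * (aMat y * nMat q.1)) * f₂ q.2 := by
    filter_upwards [hdet] with q hq
    simp [Matrix.inv_def, hq]
  have hzero : ∀ᵐ q ∂(volume : Measure ℝ).prod haarSL2, q ∉ S →
      f₁ (q.2⁻¹ * (aMat y * nMat q.1)) * f₂ q.2 = 0 := by
    filter_upwards [hdet] with ⟨x, g⟩ hg
    contrapose!
    intro hne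
    have hg₂ : g ∈ tsupport f₂ := subset_tsupport f₂ (right_ne_zero_of_mul hne)
    refine ⟨⟨g, hg₂, _, subset_tsupport f₁ (left_ne_zero_of_mul hne), ?_⟩, hg₂⟩
    exact Matrix.mul_nonsing_inv_cancel_left _ _ (hg ▸ isUnit_one)
  exact ((hcont.continuousOn.integrableOn_compact hS).congr_fun_ae
    (ae_restrict_of_ae hadj)).integrable_of_ae_notMem_eq_zero hzero

theorem abel_transform_convolution_general {ℓ : ℤ}
    (htype₁ : ∀ (θ : ℝ) (g : Matrix (Fin 2) (Fin 2) ℝ),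
      f₁ (kMat θ * g) = Complex.exp (Complex.I * (ℓ : ℂ) * (θ : ℂ)) * f₁ g)
    (htype₂ : ∀ (θ : ℝ) (g : Matrix (Fin 2) (Fin 2) ℝ),
      f₂ (g * kMat θ) = Complex.exp (Complex.I * (ℓ : ℂ) * (θ : ℂ)) * f₂ g)
    {y : ℝ} (hy : 0 < y)
    (hint : Integrable (fun q : ℝ × Matrix (Fin 2) (Fin 2) ℝ =>
      f₁ (q.2⁻¹ * (aMat y * nMat q.1)) * f₂ q.2) (volume.prod haarSL2)) :
    abelT (convG f₁ f₂) y = convA (abelT f₁) (abelT f₂) y := by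
  calc (√y : ℂ) * ∫ x, ∫ g, f₁ (g⁻¹ * (aMat y * nMat x)) * f₂ g ∂haarSL2
      = √y * ∫ g, (∫ x : ℝ, f₁ (g⁻¹ * (aMat y * nMat x)) * f₂ g) ∂haarSL2 := by
        rw [integral_integral_swap hint]
    _ = √y * ∫ t in Set.Ioi (0 : ℝ), t⁻¹ • ∫ v, ∫ x,
          f₁ ((aMat t * nMat v)⁻¹ * (aMat y * nMat x)) * f₂ (aMat t * nMat v) := by
        rw [integral_haarSL2_of_mul_kMat_eq hint.integral_prod_right]
        simp only [convG_integrand_mul_kMat htype₁ htype₂, implies_true]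
    _ = ∫ t in Set.Ioi (0 : ℝ), abelT f₁ (y / t) * abelT f₂ t * ((t⁻¹ : ℝ) : ℂ) := by
        rw [← integral_const_mul]
        refine setIntegral_congr_fun measurableSet_Ioi fun t (ht : 0 < t) => ?_
        have hsqrt : (√y : ℂ) = √(y / t) * √t := by
          rw [← Complex.ofReal_mul, ← Real.sqrt_mul (div_pos hy ht).le, div_mul_cancel₀ _ ht.ne']
        simp only [integral_mul_const, integral_inv_aMat_mul_nMat_mul ht hy, integral_const_mul,
          abelT, Complex.real_smul, hsqrt]
        ring

end Convolution

/-- Lemma 8.3: the Abel transform turns convolution on `G` into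
convolution on `A`.  If `f₁` has left type `ℓ` and `f₂` has right type `ℓ`, both continuous
and compactly supported, then `𝒜(f₁ * f₂) = (𝒜f₁) *_A (𝒜f₂)`. -/
theorem abel_transform_convolution (ℓ : ℤ) (f₁ f₂ : Matrix (Fin 2) (Fin 2) ℝ → ℂ)
    (hc₁ : Continuous f₁) (hc₂ : Continuous f₂)
    (hs₁ : HasCompactSupport f₁) (hs₂ : HasCompactSupport f₂)
    (htype₁ : ∀ (θ : ℝ) (g : Matrix (Fin 2) (Fin 2) ℝ),
      f₁ (kMat θ * g) = Complex.exp (Complex.I * (ℓ : ℂ) * (θ : ℂ)) * f₁ g)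
    (htype₂ : ∀ (θ : ℝ) (g : Matrix (Fin 2) (Fin 2) ℝ),
      f₂ (g * kMat θ) = Complex.exp (Complex.I * (ℓ : ℂ) * (θ : ℂ)) * f₂ g) :
    ∀ y : ℝ, 0 < y → abelT (convG f₁ f₂) y = convA (abelT f₁) (abelT f₂) y := fun _ hy =>
  abel_transform_convolution_general htype₁ htype₂ hy
    (integrable_convG_integrand hc₁ hc₂ hs₁ hs₂ hy)

end
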